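/- For every natural number m, 2^{2(m+1) − s(0, m+1)}·β(0, m+1) is an integer; equivalently, for the Laurent coefficients b_m = β(0, m+1) of the exterior map of the Mandelbrot set, if b_m ≠ 0 then −ν(b_m) ≤ 2(m+1) − s(0, m+1), where ν is the 2-adic valuation on ℚ. -/

import Mathlib

/-- The base-2 sum-of-digits function of degree `n`: the sum of the binary
digits of `m` at positions `≥ n`, i.e. the binary digit sum of `⌊m / 2^n⌋`. -/
def s (n m : ℕ) : ℕ := (Nat.digits 2 (m / 2 ^ n)).sum

/-!
The bound is proved for all degrees `n` at once: `2 ^ e(n, m) * β(n, m)` is an integer for `m ≥ 1`,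
where `e(n, m) = 2m + 4 - 2 ^ (n + 2) - s(n, m)`. One inducts on `m` and, for fixed `m`, downwards
on `n`, starting from the large `n` for which `β(n, m) = 0`. The factor `1 / 2` in the recursion
costs one power of two, so each term of the bracket must lie in `2 ^ (1 - e(n, m)) ℤ`. For the outer
terms this follows from `e(n + 1, m) < e(n, m)` and `e(0, j) < e(n, j + 2 ^ (n + 1) - 1)`.
In the convolution, superadditivity of `e(n, ·)` alone is one power of two short; the reflection
`k ↦ m - k` makes it up, because the off-diagonal terms occur twice, while the diagonal term is
controlled by `2 e(n, k) < e(n, 2k)`.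
-/

/-! ### Binary digit sums -/

lemma digits_sum_add_le (p : ℕ) [Fact p.Prime] (a b : ℕ) :
    (p.digits (a + b)).sum ≤ (p.digits a).sum + (p.digits b).sum := by
  -- Legendre's formula turns `a! * b! ∣ (a + b)!` into the claim.
  have hval : padicValNat p a.factorial + padicValNat p b.factorial
      ≤ padicValNat p (a + b).factorial := by
    rw [← padicValNat.mul a.factorial_ne_zero b.factorial_ne_zero,
      ← padicValNat_dvd_iff_le (a + b).factorial_ne_zero]
    exact pow_padicValNat_dvd.trans (Nat.factorial_mul_factorial_dvd_factorial_add a b)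
  have hlegendre := Nat.mul_le_mul_left (p - 1) hval
  rw [mul_add] at hlegendre
  simp only [sub_one_mul_padicValNat_factorial] at hlegendre
  have ha := Nat.digit_sum_le p a
  have hb := Nat.digit_sum_le p b
  have hab := Nat.digit_sum_le p (a + b)
  omega

lemma s_eq_s_zero_div (n m : ℕ) : s n m = s 0 (m / 2 ^ n) := by
  simp [s]

lemma s_zero_add_le (a b : ℕ) : s 0 (a + b) ≤ s 0 a + s 0 b := by
  simpa [s] using digits_sum_add_le 2 a b

lemma s_zero_pos {m : ℕ} (hm : m ≠ 0) : 0 < s 0 m := by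
  have h := sub_one_mul_padicValNat_factorial_lt_of_ne_zero 2 hm
  rw [sub_one_mul_padicValNat_factorial] at h
  simp only [s, pow_zero, Nat.div_one]
  omega

lemma s_zero_two_mul (m : ℕ) : s 0 (2 * m) = s 0 m := by
  rcases Nat.eq_zero_or_pos m with rfl | hm
  · rfl
  · simp [s, Nat.digits_base_mul one_lt_two hm]

lemma s_eq_mod_add_s_succ (n m : ℕ) : s n m = m / 2 ^ n % 2 + s (n + 1) m := by
  rw [s, s, pow_succ, ← Nat.div_div_eq_div_mul]
  rcases Nat.eq_zero_or_pos (m / 2 ^ n) with h | h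
  · simp [h]
  · rw [Nat.digits_def' one_lt_two h, List.sum_cons]

lemma s_antitone (m : ℕ) : Antitone (s · m) :=
  antitone_nat_of_succ_le fun n ↦ by grind [s_eq_mod_add_s_succ n m]

lemma s_add_eq_or (n a b : ℕ) :
    s n (a + b) = s 0 (a / 2 ^ n + b / 2 ^ n) ∨ s n (a + b) = s 0 (a / 2 ^ n + b / 2 ^ n + 1) := by
  rw [s_eq_s_zero_div, Nat.add_div (by positivity)]
  split_ifs <;> simp

lemma s_add_le (n a b : ℕ) : s n (a + b) ≤ s n a + s n b + 1 := by
  have hsum := s_zero_add_le (a / 2 ^ n) (b / 2 ^ n)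
  have hcarry := s_zero_add_le (a / 2 ^ n + b / 2 ^ n) 1
  have hone : s 0 1 = 1 := by simp [s]
  rw [s_eq_s_zero_div n a, s_eq_s_zero_div n b]
  rcases s_add_eq_or n a b with h | h <;> omega

lemma s_add_two_pow_succ_sub_one_le (n j : ℕ) : s n (j + (2 ^ (n + 1) - 1)) ≤ s n j + 1 := by
  have hquot : (2 ^ (n + 1) - 1) / 2 ^ n = 1 := by
    have := Nat.one_le_two_pow (n := n)
    rw [Nat.div_eq_iff (by positivity)]
    omega
  have hone : s 0 1 = 1 := by simp [s]
  have htwo : s 0 2 = 1 := by simp [s]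
  have hadd_one := s_zero_add_le (j / 2 ^ n) 1
  have hadd_two := s_zero_add_le (j / 2 ^ n) 2
  rw [s_eq_s_zero_div n j]
  rcases s_add_eq_or n j (2 ^ (n + 1) - 1) with h | h <;> rw [hquot] at h
  · omega
  · rw [add_assoc, one_add_one_eq_two] at h
    omega

/-! ### The exponent -/

/-- The exponent `e(n, m)` of the bound: `2 ^ faberExponent n m` clears the denominator of
`β(n, m)` for `m ≥ 1`. It is an integer since it is negative for `m` small compared to `2 ^ n`,
where `β(n, m)` vanishes. -/
def faberExponent (n m : ℕ) : ℤ := 2 * m + 4 - 2 ^ (n + 2) - s n m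

lemma faberExponent_zero_zero : faberExponent 0 0 = 0 := by
  simp [faberExponent, s]

lemma faberExponent_add_le (n a b : ℕ) :
    faberExponent n a + faberExponent n b ≤ faberExponent n (a + b) := by
  simp only [faberExponent]
  cases n with
  | zero =>
    have hs := s_zero_add_le a b
    omega
  | succ n =>
    have hs := s_add_le (n + 1) a b
    have hpow : (0 : ℤ) < 2 ^ n := by positivity
    grind

lemma faberExponent_two_mul_lt (n : ℕ) {a : ℕ} (ha : a ≠ 0) :
    2 * faberExponent n a < faberExponent n (2 * a) := by
  simp only [faberExponent]
  cases n with
  | zero =>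
    have hs := s_zero_two_mul a
    have hpos := s_zero_pos ha
    omega
  | succ n =>
    have hs := s_add_le (n + 1) a a
    have hpow : (0 : ℤ) < 2 ^ n := by positivity
    grind

lemma faberExponent_succ_lt (n m : ℕ) : faberExponent (n + 1) m < faberExponent n m := by
  have hs := s_eq_mod_add_s_succ n m
  have hpow : (0 : ℤ) < 2 ^ n := by positivity
  grind [faberExponent]

lemma faberExponent_zero_lt_add (n j : ℕ) :
    faberExponent 0 j < faberExponent n (j + (2 ^ (n + 1) - 1)) := by
  have hs := s_add_two_pow_succ_sub_one_le n j
  have hanti : s n j ≤ s 0 j := s_antitone j n.zero_le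
  have hcast : ((2 ^ (n + 1) - 1 : ℕ) : ℤ) = 2 ^ (n + 1) - 1 := by
    push_cast [Nat.one_le_two_pow]
    rfl
  have hpow : (2 : ℤ) ^ (n + 2) = 2 * 2 ^ (n + 1) := by ring
  simp only [faberExponent, Nat.cast_add, hcast]
  omega

/-! ### Symmetric sums and the lattices `2 ^ (-e) ℤ` -/

lemma sum_mem_of_involution {ι M : Type*} [AddCommGroup M] (H : AddSubgroup M) {t : Finset ι}
    {f : ι → M} (σ : ι → ι) (hσ_mem : ∀ i ∈ t, σ i ∈ t) (hσ : ∀ i ∈ t, σ (σ i) = i)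
    (hpair : ∀ i ∈ t, f i + f (σ i) ∈ H) (hfixed : ∀ i ∈ t, σ i = i → f i ∈ H) :
    ∑ i ∈ t, f i ∈ H := by
  rw [← QuotientAddGroup.eq_zero_iff, QuotientAddGroup.mk_sum]
  refine Finset.sum_involution (fun i _ ↦ σ i) (fun i hi ↦ ?_) (fun i hi hne hfix ↦ ?_) hσ_mem hσ
  · rw [← QuotientAddGroup.mk_add, QuotientAddGroup.eq_zero_iff]
    exact hpair i hi
  · exact hne ((QuotientAddGroup.eq_zero_iff _).2 (hfixed i hi hfix))

/-- The additive group `2 ^ (-e) ℤ` inside a field: the elements that `2 ^ e` makes integral. -/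
def dyadicLattice (K : Type*) [Field K] (e : ℤ) : AddSubgroup K :=
  (Int.castAddHom K).range.comap (AddMonoidHom.mulLeft ((2 : K) ^ e))

section DyadicLattice

variable {K : Type*} [Field K] {e f : ℤ} {x y : K}

lemma mem_dyadicLattice : x ∈ dyadicLattice K e ↔ ∃ z : ℤ, (2 : K) ^ e * x = z :=
  exists_congr fun _ ↦ eq_comm

lemma one_mem_dyadicLattice_zero : (1 : K) ∈ dyadicLattice K 0 :=
  mem_dyadicLattice.2 ⟨1, by simp⟩

variable [NeZero (2 : K)]

lemma dyadicLattice_mono : Monotone (dyadicLattice K) := by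
  intro e f hef x hx
  obtain ⟨z, hz⟩ := mem_dyadicLattice.1 hx
  obtain ⟨k, rfl⟩ := Int.le.dest hef
  refine mem_dyadicLattice.2 ⟨2 ^ k * z, ?_⟩
  rw [add_comm, zpow_add₀ two_ne_zero, mul_assoc, hz]
  simp

lemma mul_mem_dyadicLattice (hx : x ∈ dyadicLattice K e) (hy : y ∈ dyadicLattice K f) :
    x * y ∈ dyadicLattice K (e + f) := by
  obtain ⟨z, hz⟩ := mem_dyadicLattice.1 hx
  obtain ⟨w, hw⟩ := mem_dyadicLattice.1 hy
  refine mem_dyadicLattice.2 ⟨z * w, ?_⟩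
  rw [zpow_add₀ two_ne_zero, mul_mul_mul_comm, hz, hw, Int.cast_mul]

lemma two_mul_mem_dyadicLattice : 2 * x ∈ dyadicLattice K (e - 1) ↔ x ∈ dyadicLattice K e := by
  rw [mem_dyadicLattice, mem_dyadicLattice, ← mul_assoc, ← zpow_add_one₀ two_ne_zero,
    sub_add_cancel]

lemma sum_Icc_mul_sub_mem_dyadicLattice {c : ℕ → K} {e : ℕ → ℤ} {a m : ℕ} (ha : a ≠ 0)
    (he_add : ∀ i j, e i + e j ≤ e (i + j)) (he_two_mul : ∀ i ≠ 0, 2 * e i < e (2 * i))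
    (hc : ∀ k ∈ Finset.Icc a (m - a), c k ∈ dyadicLattice K (e k)) :
    ∑ k ∈ Finset.Icc a (m - a), c k * c (m - k) ∈ dyadicLattice K (e m - 1) := by
  have hreflect : ∀ k ∈ Finset.Icc a (m - a), m - k ∈ Finset.Icc a (m - a) := by
    simp only [Finset.mem_Icc]
    omega
  have hle : ∀ k ∈ Finset.Icc a (m - a), k ≠ 0 ∧ k ≤ m := by
    simp only [Finset.mem_Icc]
    omega
  refine sum_mem_of_involution _ (fun k ↦ m - k) hreflect
    (fun k hk ↦ Nat.sub_sub_self (hle k hk).2) (fun k hk ↦ ?_) (fun k hk hfix ↦ ?_)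
  · have hexp : e k + e (m - k) ≤ e m := by
      simpa [Nat.add_sub_cancel' (hle k hk).2] using he_add k (m - k)
    rw [Nat.sub_sub_self (hle k hk).2, mul_comm (c (m - k)), ← two_mul, two_mul_mem_dyadicLattice]
    exact dyadicLattice_mono hexp (mul_mem_dyadicLattice (hc k hk) (hc _ (hreflect k hk)))
  · have hexp : e k + e k ≤ e m - 1 := by
      have := he_two_mul k (hle k hk).1
      rw [show 2 * k = m by have := (hle k hk).2; omega] at this
      omega
    rw [hfix]
    exact dyadicLattice_mono hexp (mul_mem_dyadicLattice (hc k hk) (hc k hk))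

end DyadicLattice

/-! ### The backward recursion -/

/-- The Ewing–Schober recursion characterising the coefficients `β(n, m)` of the Faber polynomial
expansions, over an arbitrary field. The truncated subtraction `m + 1 - 2 ^ (n + 1)` is
`m - (2 ^ (n + 1) - 1)`, exact in the range of `eq_half_mul`. -/
structure IsFaberCoeff {K : Type*} [Field K] (β : ℕ → ℕ → K) : Prop where
  apply_zero : ∀ n, β n 0 = 1
  eq_zero : ∀ n m, 1 ≤ m → m ≤ 2 ^ (n + 1) - 2 → β n m = 0
  eq_half_mul : ∀ n m, 2 ^ (n + 1) - 1 ≤ m →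
    β n m = (1 / 2) * (β (n + 1) m
      - ∑ k ∈ Finset.Icc (2 ^ (n + 1) - 1) (m + 1 - 2 ^ (n + 1)), β n k * β n (m - k)
      - β 0 (m + 1 - 2 ^ (n + 1)))

namespace IsFaberCoeff

variable {K : Type*} [Field K] {β : ℕ → ℕ → K}

lemma eq_zero_of_le (hβ : IsFaberCoeff β) {n m : ℕ} (hm : m ≠ 0) (hmn : m ≤ n) : β n m = 0 := by
  have hlt : n < 2 ^ n := Nat.lt_two_pow_self
  exact hβ.eq_zero n m (Nat.one_le_iff_ne_zero.2 hm) (by rw [pow_succ]; omega)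

variable [NeZero (2 : K)]

lemma two_mul_apply (hβ : IsFaberCoeff β) {n m a : ℕ} (ha : 2 ^ (n + 1) - 1 = a) (ham : a ≤ m) :
    2 * β n m
      = β (n + 1) m - ∑ k ∈ Finset.Icc a (m - a), β n k * β n (m - k) - β 0 (m - a) := by
  have hsub : m + 1 - 2 ^ (n + 1) = m - a := by
    have := Nat.one_le_two_pow (n := n + 1)
    omega
  rw [hβ.eq_half_mul n m (ha.trans_le ham), ha, hsub, ← mul_assoc, mul_one_div_cancel two_ne_zero,
    one_mul]

lemma mem_dyadicLattice_of_succ (hβ : IsFaberCoeff β) {n m : ℕ} (hm : m ≠ 0)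
    (hlt : ∀ k < m, k ≠ 0 → ∀ i, β i k ∈ dyadicLattice K (faberExponent i k))
    (hsucc : β (n + 1) m ∈ dyadicLattice K (faberExponent (n + 1) m)) :
    β n m ∈ dyadicLattice K (faberExponent n m) := by
  obtain ⟨a, ha⟩ : ∃ a, 2 ^ (n + 1) - 1 = a := ⟨_, rfl⟩
  have ha_pos : 0 < a := by
    have := Nat.one_lt_two_pow n.succ_ne_zero
    omega
  rcases lt_or_ge m a with hma | ham
  · rw [hβ.eq_zero n m (Nat.one_le_iff_ne_zero.2 hm) (by omega)]
    exact zero_mem _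
  have hconv : ∑ k ∈ Finset.Icc a (m - a), β n k * β n (m - k)
      ∈ dyadicLattice K (faberExponent n m - 1) := by
    refine sum_Icc_mul_sub_mem_dyadicLattice ha_pos.ne' (faberExponent_add_le n)
      (fun _ ↦ faberExponent_two_mul_lt n) fun k hk ↦ ?_
    rw [Finset.mem_Icc] at hk
    exact hlt k (by omega) (by omega) n
  have hlast : β 0 (m - a) ∈ dyadicLattice K (faberExponent 0 (m - a)) := by
    rcases eq_or_ne (m - a) 0 with h | h
    · rw [h, hβ.apply_zero, faberExponent_zero_zero]
      exact one_mem_dyadicLattice_zero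
    · exact hlt _ (by omega) h 0
  have hexp : faberExponent 0 (m - a) < faberExponent n m := by
    simpa [ha, Nat.sub_add_cancel ham] using faberExponent_zero_lt_add n (m - a)
  rw [← two_mul_mem_dyadicLattice, hβ.two_mul_apply ha ham]
  exact sub_mem (sub_mem
    (dyadicLattice_mono (Int.le_sub_one_of_lt (faberExponent_succ_lt n m)) hsucc) hconv)
    (dyadicLattice_mono (Int.le_sub_one_of_lt hexp) hlast)

theorem mem_dyadicLattice (hβ : IsFaberCoeff β) (n : ℕ) {m : ℕ} (hm : m ≠ 0) :
    β n m ∈ dyadicLattice K (faberExponent n m) := by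
  induction m using Nat.strong_induction_on generalizing n with
  | _ m ih =>
    rcases le_total m n with hmn | hnm
    · rw [hβ.eq_zero_of_le hm hmn]
      exact zero_mem _
    induction hnm using Nat.decreasingInduction with
    | self =>
      rw [hβ.eq_zero_of_le hm le_rfl]
      exact zero_mem _
    | of_succ n _ hsucc =>
      exact hβ.mem_dyadicLattice_of_succ hm (fun k hk hk0 i ↦ ih k hk i hk0) hsucc

end IsFaberCoeff

theorem two_pow_b_int_general {K : Type*} [Field K] [NeZero (2 : K)] {β : ℕ → ℕ → K}
    (hβ : IsFaberCoeff β) (n : ℕ) {m : ℕ} (hm : m ≠ 0) :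
    ∃ z : ℤ, (2 : K) ^ (2 * (m : ℤ) + 4 - 2 ^ (n + 2) - s n m) * β n m = z :=
  mem_dyadicLattice.1 (hβ.mem_dyadicLattice n hm)

open Finset in
/-- For `β : ℕ → ℕ → ℚ` satisfying the Ewing–Schober backward recursion, the
rational `2^(2(m+1) - s(0, m+1))·β(0, m+1)` is an integer; equivalently, for
the Laurent coefficients `b_m = β(0, m+1)` one has
`-ν(b_m) ≤ 2(m+1) - s(0, m+1)` when `b_m ≠ 0`. -/
theorem two_pow_b_int (β : ℕ → ℕ → ℚ)
    (hβ0 : ∀ n, β n 0 = 1)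
    (hβzero : ∀ n m, 1 ≤ m → m ≤ 2 ^ (n + 1) - 2 → β n m = 0)
    (hβrec : ∀ n m, 2 ^ (n + 1) - 1 ≤ m →
      β n m = (1 / 2) * (β (n + 1) m
        - ∑ k ∈ Icc (2 ^ (n + 1) - 1) (m + 1 - 2 ^ (n + 1)), β n k * β n (m - k)
        - β 0 (m + 1 - 2 ^ (n + 1))))
    (m : ℕ) :
    ∃ z : ℤ, (2 : ℚ) ^ (2 * ((m : ℤ) + 1) - (s 0 (m + 1) : ℤ)) * β 0 (m + 1) = (z : ℚ) := by
  simpa using two_pow_b_int_general ⟨hβ0, hβzero, hβrec⟩ 0 m.succ_ne_zero
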